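/- arXiv:2311.18024 — 2 statements merged into one kernel-verified Lean document; each statement's English description precedes it below -/
import Mathlib

section
/- Let β = (Y_g, β_g)_{g∈G} be a global action of a groupoid G on a set Y and let X ⊆ Y. For each g ∈ G put X_g = X ∩ β_g(X ∩ Y_{g⁻¹}) and Ȳ_g = ⋃_{h ∈ G, r(h)=r(g)} β_h(X_{d(h)}). Then Ȳ = ⋃_{e ∈ G_0} Ȳ_e is the smallest β-invariant subset of Y containing X; that is, X ⊆ Ȳ, β_g(Ȳ ∩ Y_{g⁻¹}) = Ȳ ∩ Y_g for all g ∈ G, and any β-invariant subset S of Y with X ⊆ S contains Ȳ. -/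
universe u v w

/-- A groupoid as an algebraic structure: a set `G` with a (totalized) partially
defined multiplication, inversion, source `d` and range `r`.  The product `mul g h`
is only meaningful when `d g = r h`. -/
structure SetGroupoid (G : Type u) where
  mul : G → G → G
  inv : G → G
  d : G → G
  r : G → G
  inv_inv : ∀ g, inv (inv g) = g
  d_inv : ∀ g, d (inv g) = r g
  r_inv : ∀ g, r (inv g) = d g
  mul_d_self : ∀ g, mul g (d g) = g
  r_mul_self : ∀ g, mul (r g) g = g
  inv_mul : ∀ g, mul (inv g) g = d g
  mul_inv : ∀ g, mul g (inv g) = r g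
  d_mul : ∀ g h, d g = r h → d (mul g h) = d h
  r_mul : ∀ g h, d g = r h → r (mul g h) = r g
  mul_assoc : ∀ g h k, d g = r h → d h = r k → mul (mul g h) k = mul g (mul h k)
  d_idem : ∀ g, d (d g) = d g
  r_d : ∀ g, r (d g) = d g

/-- A (set theoretical) partial action of a groupoid `G` on a set `X`:
subsets `D g = X_g` and (totalized) bijections `act g : X_{g⁻¹} → X_g`, together with
the anchor map sending `x` to the unique identity `e` with `x ∈ X_e`. -/
structure PartialAction {G : Type u} (𝒢 : SetGroupoid G) (X : Type v) where
  D : G → Set X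
  act : G → X → X
  anchor : X → G
  anchor_isUnit : ∀ x, 𝒢.d (anchor x) = anchor x
  mem_anchor : ∀ x, x ∈ D (anchor x)
  anchor_unique : ∀ x e, 𝒢.d e = e → x ∈ D e → e = anchor x
  D_subset : ∀ g, D g ⊆ D (𝒢.r g)
  act_unit : ∀ e, 𝒢.d e = e → ∀ x ∈ D e, act e x = x
  act_mem : ∀ g, ∀ x ∈ D (𝒢.inv g), act g x ∈ D g
  act_act : ∀ g, ∀ x ∈ D (𝒢.inv g), act (𝒢.inv g) (act g x) = x
  act_comp_mem : ∀ g h, 𝒢.d g = 𝒢.r h → ∀ x, x ∈ D (𝒢.inv g) → x ∈ D h →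
      act g x ∈ D (𝒢.mul g h)
  act_comp : ∀ g h, 𝒢.d g = 𝒢.r h → ∀ x, x ∈ D (𝒢.inv h) → act h x ∈ D (𝒢.inv g) →
      act g (act h x) = act (𝒢.mul g h) x

namespace PartialAction

variable {G : Type u} {X : Type v} {𝒢 : SetGroupoid G}

/-- A partial action is global if `α_{gh} = α_g ∘ α_h` (as partial maps, including
equality of domains) for every composable pair `(g,h) ∈ G²`. -/
def IsGlobal (α : PartialAction 𝒢 X) : Prop :=
  ∀ g h, 𝒢.d g = 𝒢.r h →
    ((∀ x, x ∈ α.D (𝒢.inv (𝒢.mul g h)) ↔ x ∈ α.D (𝒢.inv h) ∧ α.act h x ∈ α.D (𝒢.inv g)) ∧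
      ∀ x ∈ α.D (𝒢.inv (𝒢.mul g h)), α.act (𝒢.mul g h) x = α.act g (α.act h x))

/-- Transitivity: some point has orbit equal to all of `X`. -/
def Transitive (α : PartialAction 𝒢 X) : Prop :=
  ∃ x : X, ∀ y : X, ∃ g, x ∈ α.D (𝒢.inv g) ∧ y = α.act g x

/-- Freeness: every stabilizer reduces to the anchor identity. -/
def Free (α : PartialAction 𝒢 X) : Prop :=
  ∀ (x : X) (g : G), x ∈ α.D (𝒢.inv g) → α.act g x = x → g = α.anchor x

end PartialAction

/-- `β` (a global action of `G` on `Y`) is a globalization of the partial action `α`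
of `G` on `X`, via the injection `i : X → Y`. -/
structure IsGlobalization {G : Type u} {X : Type v} {Y : Type w} {𝒢 : SetGroupoid G}
    (α : PartialAction 𝒢 X) (β : PartialAction 𝒢 Y) (i : X → Y) : Prop where
  global : β.IsGlobal
  inj : Function.Injective i
  cond_i : ∀ g, i '' α.D g = Set.range i ∩ β.act g '' (Set.range i ∩ β.D (𝒢.inv g))
  cond_ii : ∀ g, ∀ x ∈ α.D (𝒢.inv g), β.act g (i x) = i (α.act g x)
  cond_iii : ∀ g, β.D g = ⋃ h ∈ {h : G | 𝒢.r h = 𝒢.r g}, β.act h '' (i '' α.D (𝒢.d h))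

/-- The restriction of the global action `β` to the subset `X ⊆ Y`: `X_g = X ∩ β_g(X ∩ Y_{g⁻¹})`. -/
def restrictedDomain {G : Type u} {Y : Type v} {𝒢 : SetGroupoid G}
    (β : PartialAction 𝒢 Y) (X : Set Y) (g : G) : Set Y :=
  X ∩ β.act g '' (X ∩ β.D (𝒢.inv g))

/-- `Ȳ_g = ⋃_{h, r h = r g} β_h(X_{d h})`. -/
def envelopePiece {G : Type u} {Y : Type v} {𝒢 : SetGroupoid G}
    (β : PartialAction 𝒢 Y) (X : Set Y) (g : G) : Set Y :=
  ⋃ h ∈ {h : G | 𝒢.r h = 𝒢.r g}, β.act h '' restrictedDomain β X (𝒢.d h)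

/-- `Ȳ = ⋃_{e ∈ G₀} Ȳ_e`. -/
def envelope {G : Type u} {Y : Type v} {𝒢 : SetGroupoid G}
    (β : PartialAction 𝒢 Y) (X : Set Y) : Set Y :=
  ⋃ e ∈ {e : G | 𝒢.d e = e}, envelopePiece β X e

/-!
For any partial action, the points reachable from `X` form the least invariant subset containing
`X`, since two consecutive moves compose to a single one. When the action is global, `β_h` is
defined on all of `Y_{d(h)}`, so `Ȳ` is exactly this set of reachable points.
-/

namespace SetGroupoid

variable {G : Type u} (𝒢 : SetGroupoid G)

theorem d_r (g : G) : 𝒢.d (𝒢.r g) = 𝒢.r g := by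
  rw [← 𝒢.d_inv, 𝒢.d_idem]

theorem r_eq_self_of_d_eq_self {e : G} (he : 𝒢.d e = e) : 𝒢.r e = e := by
  simpa only [he] using 𝒢.r_d e

theorem r_r (g : G) : 𝒢.r (𝒢.r g) = 𝒢.r g :=
  𝒢.r_eq_self_of_d_eq_self (𝒢.d_r g)

theorem eq_inv_of_mul_eq_r {g h : G} (hgh : 𝒢.d g = 𝒢.r h) (hmul : 𝒢.mul g h = 𝒢.r g) :
    h = 𝒢.inv g :=
  calc
    h = 𝒢.mul (𝒢.mul (𝒢.inv g) g) h := by rw [𝒢.inv_mul, hgh, 𝒢.r_mul_self]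
    _ = 𝒢.mul (𝒢.inv g) (𝒢.mul g h) := 𝒢.mul_assoc _ _ _ (𝒢.d_inv g) hgh
    _ = 𝒢.inv g := by rw [hmul, ← 𝒢.d_inv, 𝒢.mul_d_self]

theorem inv_eq_self_of_d_eq_self {e : G} (he : 𝒢.d e = e) : 𝒢.inv e = e := by
  have hr : 𝒢.r e = e := 𝒢.r_eq_self_of_d_eq_self he
  have hmul : 𝒢.mul e e = 𝒢.r e := by simpa only [he, hr] using 𝒢.mul_d_self e
  exact (𝒢.eq_inv_of_mul_eq_r (he.trans hr.symm) hmul).symm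

theorem inv_mul_rev {g h : G} (hgh : 𝒢.d g = 𝒢.r h) :
    𝒢.inv (𝒢.mul g h) = 𝒢.mul (𝒢.inv h) (𝒢.inv g) := by
  have h_inv : 𝒢.d (𝒢.inv h) = 𝒢.r (𝒢.inv g) := by rw [𝒢.d_inv, 𝒢.r_inv, hgh]
  have h_inner : 𝒢.d h = 𝒢.r (𝒢.mul (𝒢.inv h) (𝒢.inv g)) := by
    rw [𝒢.r_mul _ _ h_inv, 𝒢.r_inv]
  have h_cancel : 𝒢.mul h (𝒢.mul (𝒢.inv h) (𝒢.inv g)) = 𝒢.inv g := by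
    rw [← 𝒢.mul_assoc _ _ _ (𝒢.r_inv h).symm h_inv, 𝒢.mul_inv, ← hgh, ← 𝒢.r_inv, 𝒢.r_mul_self]
  refine (𝒢.eq_inv_of_mul_eq_r ((𝒢.d_mul _ _ hgh).trans h_inner) ?_).symm
  rw [𝒢.mul_assoc _ _ _ hgh h_inner, h_cancel, 𝒢.mul_inv, 𝒢.r_mul _ _ hgh]

end SetGroupoid

namespace PartialAction

variable {G : Type u} {Y : Type v} {𝒢 : SetGroupoid G} (β : PartialAction 𝒢 Y)

theorem D_inv_subset (g : G) : β.D (𝒢.inv g) ⊆ β.D (𝒢.d g) := by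
  simpa only [𝒢.r_inv] using β.D_subset (𝒢.inv g)

theorem d_eq_r_of_mem {g h : G} {x : Y} (hg : x ∈ β.D (𝒢.inv g)) (hh : x ∈ β.D h) :
    𝒢.d g = 𝒢.r h :=
  (β.anchor_unique x _ (𝒢.d_idem g) (β.D_inv_subset g hg)).trans
    (β.anchor_unique x _ (𝒢.d_r h) (β.D_subset h hh)).symm

theorem mem_D_inv_mul {g h : G} {x : Y} (hx : x ∈ β.D (𝒢.inv h))
    (hhx : β.act h x ∈ β.D (𝒢.inv g)) : x ∈ β.D (𝒢.inv (𝒢.mul g h)) := by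
  have hmem : β.act h x ∈ β.D h := β.act_mem h x hx
  have hgh : 𝒢.d g = 𝒢.r h := β.d_eq_r_of_mem hhx hmem
  have hmul := β.act_comp_mem (𝒢.inv h) (𝒢.inv g) (by rw [𝒢.d_inv, 𝒢.r_inv, hgh]) _
    (by rwa [𝒢.inv_inv]) hhx
  rwa [β.act_act h x hx, ← 𝒢.inv_mul_rev hgh] at hmul

/-- Invariance of a subset `S` under a partial action: `β_g(S ∩ Y_{g⁻¹}) ⊆ S` for all `g`. -/
def IsInvariant (S : Set Y) : Prop :=
  ∀ g : G, β.act g '' (S ∩ β.D (𝒢.inv g)) ⊆ S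

/-- The union of the orbits of the points of `X` under a partial action; it is the least invariant
subset containing `X`. -/
def saturation (X : Set Y) : Set Y :=
  ⋃ g : G, β.act g '' (X ∩ β.D (𝒢.inv g))

variable {β}

theorem IsInvariant.act_image_eq {S : Set Y} (hS : β.IsInvariant S) (g : G) :
    β.act g '' (S ∩ β.D (𝒢.inv g)) = S ∩ β.D g := by
  refine Set.Subset.antisymm (Set.subset_inter (hS g) ?_) ?_
  · rintro _ ⟨x, ⟨-, hx⟩, rfl⟩
    exact β.act_mem g x hx
  · rintro y ⟨hyS, hyD⟩
    have hy : y ∈ β.D (𝒢.inv (𝒢.inv g)) := by rwa [𝒢.inv_inv]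
    have hact : β.act g (β.act (𝒢.inv g) y) = y := by
      simpa only [𝒢.inv_inv] using β.act_act (𝒢.inv g) y hy
    exact ⟨β.act (𝒢.inv g) y, ⟨hS _ ⟨y, ⟨hyS, hy⟩, rfl⟩, β.act_mem _ y hy⟩, hact⟩

theorem IsInvariant.saturation_subset {S X : Set Y} (hS : β.IsInvariant S) (hXS : X ⊆ S) :
    β.saturation X ⊆ S :=
  Set.iUnion_subset fun g =>
    (Set.image_mono (Set.inter_subset_inter_left _ hXS)).trans (hS g)

variable (β)

theorem act_image_eq_self {e : G} (he : 𝒢.d e = e) {S : Set Y} (hS : S ⊆ β.D e) :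
    β.act e '' S = S :=
  Set.EqOn.image_eq_self fun x hx => β.act_unit e he x (hS hx)

theorem subset_saturation (X : Set Y) : X ⊆ β.saturation X := by
  intro x hx
  have he : 𝒢.d (β.anchor x) = β.anchor x := β.anchor_isUnit x
  have hmem : x ∈ β.D (𝒢.inv (β.anchor x)) := by
    rw [𝒢.inv_eq_self_of_d_eq_self he]
    exact β.mem_anchor x
  exact Set.mem_iUnion.2
    ⟨β.anchor x, x, ⟨hx, hmem⟩, β.act_unit _ he x (β.mem_anchor x)⟩

theorem isInvariant_saturation (X : Set Y) : β.IsInvariant (β.saturation X) := by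
  rintro g _ ⟨y, ⟨hy, hg⟩, rfl⟩
  obtain ⟨h, x, ⟨hxX, hxD⟩, rfl⟩ := Set.mem_iUnion.1 hy
  have hgh : 𝒢.d g = 𝒢.r h := β.d_eq_r_of_mem hg (β.act_mem h x hxD)
  exact Set.mem_iUnion.2
    ⟨𝒢.mul g h, x, ⟨hxX, β.mem_D_inv_mul hxD hg⟩, (β.act_comp g h hgh x hxD hg).symm⟩

theorem restrictedDomain_of_d_eq_self (X : Set Y) {e : G} (he : 𝒢.d e = e) :
    restrictedDomain β X e = X ∩ β.D e := by
  rw [restrictedDomain, 𝒢.inv_eq_self_of_d_eq_self he,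
    β.act_image_eq_self he Set.inter_subset_right, ← Set.inter_assoc, Set.inter_self]

theorem envelope_eq_iUnion (X : Set Y) :
    envelope β X = ⋃ g : G, β.act g '' (X ∩ β.D (𝒢.d g)) := by
  ext y
  simp only [envelope, envelopePiece, Set.mem_iUnion, Set.mem_ofPred_eq, exists_prop,
    β.restrictedDomain_of_d_eq_self X (𝒢.d_idem _)]
  constructor
  · rintro ⟨-, -, g, -, hy⟩
    exact ⟨g, hy⟩
  · rintro ⟨g, hy⟩
    exact ⟨𝒢.r g, 𝒢.d_r g, g, (𝒢.r_r g).symm, hy⟩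

variable {β}

theorem IsGlobal.D_inv (hβ : β.IsGlobal) (g : G) : β.D (𝒢.inv g) = β.D (𝒢.d g) := by
  refine Set.Subset.antisymm (β.D_inv_subset g) fun x hx => ?_
  have hmem : x ∈ β.D (𝒢.inv (𝒢.mul (𝒢.inv g) g)) := by
    rwa [𝒢.inv_mul, 𝒢.inv_eq_self_of_d_eq_self (𝒢.d_idem g)]
  exact (((hβ (𝒢.inv g) g (𝒢.d_inv g)).1 x).1 hmem).1

theorem IsGlobal.envelope_eq_saturation (hβ : β.IsGlobal) (X : Set Y) :
    envelope β X = β.saturation X := by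
  simp only [β.envelope_eq_iUnion, saturation, hβ.D_inv]

end PartialAction

/-- Given a global action `β` of a groupoid `G` on a set `Y` and a
subset `X ⊆ Y`, the set `Ȳ = ⋃_{e ∈ G₀} Ȳ_e` is the smallest `β`-invariant subset of `Y`
containing `X`: `X ⊆ Ȳ`, `β_g(Ȳ ∩ Y_{g⁻¹}) = Ȳ ∩ Y_g` for all `g`, and any `β`-invariant
subset `S` of `Y` containing `X` contains `Ȳ`. -/
theorem smallest_invariant_subset {G : Type u} {Y : Type v} {𝒢 : SetGroupoid G}
    (β : PartialAction 𝒢 Y) (hβ : β.IsGlobal) (X : Set Y) :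
    X ⊆ envelope β X ∧
    (∀ g : G, β.act g '' (envelope β X ∩ β.D (𝒢.inv g)) = envelope β X ∩ β.D g) ∧
    (∀ S : Set Y, X ⊆ S → (∀ g : G, β.act g '' (S ∩ β.D (𝒢.inv g)) ⊆ S) →
      envelope β X ⊆ S) := by
  rw [hβ.envelope_eq_saturation X]
  exact ⟨β.subset_saturation X, (β.isInvariant_saturation X).act_image_eq,
    fun S hXS (hS : β.IsInvariant S) => hS.saturation_subset hXS⟩
end

section
/- Let α be a transitive partial action of a group G on a set X. Then any globalization of α is isomorphic (as a G-action) to the left coset action of G on G/stab_α(x), for any x ∈ X. -/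
universe u v w

/-- A partial action of a group `G` on a set `X`: subsets `D g = X_g` and (totalized)
bijections `act g : X_{g⁻¹} → X_g`. -/
structure PartialGroupAction (G : Type u) [Group G] (X : Type v) where
  D : G → Set X
  act : G → X → X
  D_one : D (1 : G) = Set.univ
  act_one : ∀ x : X, act 1 x = x
  act_mem : ∀ g : G, ∀ x ∈ D g⁻¹, act g x ∈ D g
  act_act : ∀ g : G, ∀ x ∈ D g⁻¹, act g⁻¹ (act g x) = x
  act_comp_mem : ∀ g h : G, ∀ x, x ∈ D g⁻¹ → x ∈ D h → act g x ∈ D (g * h)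
  act_comp : ∀ g h : G, ∀ x, x ∈ D h⁻¹ → act h x ∈ D g⁻¹ →
      act g (act h x) = act (g * h) x

/-!
Since `i` intertwines the actions and is injective, the partial orbits and stabilizers of `α` are
the traces on `X` of the orbits and stabilizers of `Y`: applying the condition on `i(X_{g⁻¹})` to
`i(x)` shows that `g • i(x)` falls back into `i(X)` only when `x ∈ X_{g⁻¹}`. Hence `G` is
transitive on `Y`, the translates of `i(X)` being all of `Y`, and the orbit map `g ↦ g • i(x)`
factors through a bijection from `G / stab_α(x)`, as in the orbit-stabilizer theorem.
-/

namespace PartialGroupAction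

variable {G : Type u} [Group G] {X : Type v} (α : PartialGroupAction G X)

/-- The orbit of a point under a partial action, used to express transitivity. -/
def orbit (x : X) : Set X :=
  {y | ∃ g : G, x ∈ α.D g⁻¹ ∧ y = α.act g x}

/-- Transitivity of a partial action: some orbit is everything. In particular `X` is nonempty. -/
def IsTransitive : Prop :=
  ∃ x : X, ∀ y : X, y ∈ α.orbit x

/-- The stabilizer `stab_α(x)`, the subgroup whose cosets model the globalizations of a transitive
partial action. Membership requires `x ∈ X_{g⁻¹}` because `act g` is a total function with
unconstrained values outside `X_{g⁻¹}`. -/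
def stabilizer (x : X) : Subgroup G where
  carrier := {g | x ∈ α.D g⁻¹ ∧ α.act g x = x}
  one_mem' := by simp [α.D_one, α.act_one]
  mul_mem' := by
    rintro g h ⟨hgD, hg⟩ ⟨hhD, hh⟩
    have hhD' : x ∈ α.D h := hh ▸ α.act_mem h x hhD
    have hh' : α.act h⁻¹ x = x := by simpa only [hh] using α.act_act h x hhD
    constructor
    · have hD := α.act_comp_mem h⁻¹ g⁻¹ x (by rwa [inv_inv]) hgD
      rwa [hh', ← mul_inv_rev] at hD
    · rw [← α.act_comp g h x hhD (by rwa [hh]), hh, hg]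
  inv_mem' := by
    rintro g ⟨hgD, hg⟩
    constructor
    · simpa only [hg, inv_inv] using α.act_mem g x hgD
    · simpa only [hg] using α.act_act g x hgD

variable {α} {Y : Type w} [MulAction G Y] {i : X → Y} {x y : X}

variable (α i) in
/-- `α` is the restriction of the global action on `Y` along the injection `i`: these are the
conditions on a globalization other than that the translates of `i(X)` cover `Y`. -/
structure IsRestriction : Prop where
  injective : Function.Injective i
  image_D (g : G) : i '' α.D g = Set.range i ∩ (fun y => g • y) '' Set.range i
  smul_map (g : G) (x : X) (hx : x ∈ α.D g⁻¹) : g • i x = i (α.act g x)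

variable (α i) in
/-- The global action on `Y` is a globalization of `α` via `i`. -/
structure IsGlobalization : Prop extends IsRestriction α i where
  exists_eq_smul_map (y : Y) : ∃ (g : G) (x : X), y = g • i x

namespace IsRestriction

theorem mem_D_inv_of_smul_map_eq_map (h : IsRestriction α i) {g : G} (hg : g • i x = i y) :
    x ∈ α.D g⁻¹ := by
  rw [← h.injective.mem_set_image, h.image_D]
  exact ⟨⟨x, rfl⟩, i y, ⟨y, rfl⟩, inv_smul_eq_iff.mpr hg.symm⟩

theorem smul_map_eq_map_iff (h : IsRestriction α i) {g : G} :
    g • i x = i y ↔ x ∈ α.D g⁻¹ ∧ α.act g x = y := by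
  constructor
  · intro hg
    have hx := h.mem_D_inv_of_smul_map_eq_map hg
    exact ⟨hx, h.injective (by rw [← h.smul_map g x hx, hg])⟩
  · rintro ⟨hx, rfl⟩
    exact h.smul_map g x hx

theorem map_mem_orbit_iff (h : IsRestriction α i) :
    i y ∈ MulAction.orbit G (i x) ↔ y ∈ α.orbit x :=
  exists_congr fun _ => h.smul_map_eq_map_iff.trans (and_congr_right' eq_comm)

theorem stabilizer_eq (h : IsRestriction α i) (x : X) :
    α.stabilizer x = MulAction.stabilizer G (i x) :=
  Subgroup.ext fun _ => h.smul_map_eq_map_iff.symm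

/-- The equivariant map `g stab_α(x) ↦ g • i(x)`, which realizes the isomorphism of the left coset
action with a globalization. -/
def cosetHom (h : IsRestriction α i) (x : X) : G ⧸ α.stabilizer x →[G] Y where
  toFun q := MulAction.ofQuotientStabilizer G (i x)
    (Subgroup.quotientEquivOfEq (h.stabilizer_eq x) q)
  map_smul' g q := by
    induction q using QuotientGroup.induction_on with
    | H a => exact mul_smul g a (i x)

theorem cosetHom_mk (h : IsRestriction α i) (x : X) (g : G) :
    h.cosetHom x (g : G ⧸ α.stabilizer x) = g • i x :=
  rfl

theorem cosetHom_injective (h : IsRestriction α i) (x : X) : Function.Injective (h.cosetHom x) :=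
  (MulAction.injective_ofQuotientStabilizer G (i x)).comp
    (Subgroup.quotientEquivOfEq (h.stabilizer_eq x)).injective

end IsRestriction

namespace IsGlobalization

theorem isPretransitive (h : IsGlobalization α i) (hα : α.IsTransitive) :
    MulAction.IsPretransitive G Y := by
  obtain ⟨x₀, hx₀⟩ := hα
  refine .of_orbit (x₀ := i x₀) fun y => ?_
  obtain ⟨g, x, rfl⟩ := h.exists_eq_smul_map y
  have hx : i x ∈ MulAction.orbit G (i x₀) := h.map_mem_orbit_iff.mpr (hx₀ x)
  exact MulAction.mem_orbit_of_mem_orbit g hx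

theorem cosetHom_bijective (h : IsGlobalization α i) (hα : α.IsTransitive) (x : X) :
    Function.Bijective (h.cosetHom x) := by
  refine ⟨h.cosetHom_injective x, fun y => ?_⟩
  have := h.isPretransitive hα
  obtain ⟨g, hg⟩ := MulAction.exists_smul_eq G (i x) y
  exact ⟨g, hg⟩

end IsGlobalization

end PartialGroupAction

/-- Let `α` be a transitive partial action of a group `G` on `X` and
let the `G`-action on `Y` (a genuine `MulAction`) be a globalization of `α` via the
injection `i`.  Then for any `x ∈ X` this globalization is isomorphic to the left coset
action of `G` on `G / stab_α(x)`: there is a surjection `φ : G → Y` (namely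
`g ↦ g • i x`) whose fibers are exactly the left cosets of `stab_α(x)` and which is
equivariant; i.e. the induced bijection `G / stab_α(x) → Y` is a `G`-equivariant
bijection. -/
theorem globalization_iso_left_coset_action {G : Type u} {X : Type v} {Y : Type w}
    [Group G] (α : PartialGroupAction G X)
    (htrans : ∃ x : X, ∀ y : X, ∃ g : G, x ∈ α.D g⁻¹ ∧ y = α.act g x)
    [MulAction G Y] (i : X → Y) (hi : Function.Injective i)
    (hcond_i : ∀ g : G, i '' α.D g = Set.range i ∩ (fun y => g • y) '' Set.range i)
    (hcond_ii : ∀ g : G, ∀ x ∈ α.D g⁻¹, g • i x = i (α.act g x))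
    (hcond_iii : ∀ y : Y, ∃ (g : G) (x : X), y = g • i x)
    (x : X) :
    ∃ φ : G → Y,
      (∀ g : G, φ g = g • i x) ∧
      Function.Surjective φ ∧
      (∀ g₁ g₂ : G, φ g₁ = φ g₂ ↔
        (x ∈ α.D (g₂⁻¹ * g₁)⁻¹ ∧ α.act (g₂⁻¹ * g₁) x = x)) ∧
      (∀ g h : G, φ (g * h) = g • φ h) := by
  have h : α.IsGlobalization i := ⟨⟨hi, hcond_i, hcond_ii⟩, hcond_iii⟩
  have hbij : Function.Bijective (h.cosetHom x) := h.cosetHom_bijective htrans x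
  refine ⟨fun g => h.cosetHom x g, h.cosetHom_mk x,
    hbij.surjective.comp QuotientGroup.mk_surjective, fun g₁ g₂ => ?_,
    fun g k => map_smul (h.cosetHom x) g (k : G ⧸ α.stabilizer x)⟩
  calc
    h.cosetHom x g₁ = h.cosetHom x g₂ ↔ (g₂ : G ⧸ α.stabilizer x) = g₁ :=
      hbij.injective.eq_iff.trans eq_comm
    _ ↔ g₂⁻¹ * g₁ ∈ α.stabilizer x := QuotientGroup.eq
    _ ↔ x ∈ α.D (g₂⁻¹ * g₁)⁻¹ ∧ α.act (g₂⁻¹ * g₁) x = x := Iff.rfl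
end
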